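/- There is a universal constant c > 0 with the following property. For every positive integer n there exists an origin-symmetric convex body L ⊆ ℝⁿ with nonempty interior such that for every p ≥ 1, d_ovr(L, L_pⁿ) ≥ c·√n/√p. -/

import Mathlib

open MeasureTheory Metric Set

/-- `D ⊆ ℝⁿ` is a linear image of the unit ball of an `n`-dimensional subspace of
the Banach space `L_p` (of the Lebesgue measure on `[0,1]`). -/
def IsLpBallImage (n : ℕ) (p : ℝ) (D : Set (EuclideanSpace ℝ (Fin n))) : Prop :=
  ∃ V : Submodule ℝ (Lp ℝ (ENNReal.ofReal p) (volume.restrict (Set.Icc (0:ℝ) 1))),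
    Module.finrank ℝ V = n ∧
    ∃ T : V ≃ₗ[ℝ] EuclideanSpace ℝ (Fin n),
      D = T '' {v : V |
        ‖(v : Lp ℝ (ENNReal.ofReal p) (volume.restrict (Set.Icc (0:ℝ) 1)))‖ ≤ 1}

lemma net_card {n : ℕ} (s : Finset (EuclideanSpace ℝ (Fin n))) (hs : ∀ c ∈ s, ‖c‖ = 1)
    (h : ∀ c ∈ s, ∀ d ∈ s, c ≠ d → (1/400:ℝ) ≤ ‖c - d‖) : s.card ≤ 801 ^ n := by
  let μ : Measure (EuclideanSpace ℝ (Fin n)) := volume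
  let δ : ℝ := (1 : ℝ) / 800
  let ρ : ℝ := (801 : ℝ) / 800
  have ρpos : 0 < ρ := by norm_num [ρ]
  set A := ⋃ c ∈ s, ball (c : EuclideanSpace ℝ (Fin n)) δ with hA
  have D : Set.Pairwise (s : Set (EuclideanSpace ℝ (Fin n)))
      (Function.onFun Disjoint fun c => ball (c : EuclideanSpace ℝ (Fin n)) δ) := by
    rintro c hc d hd hcd
    apply ball_disjoint_ball
    rw [dist_eq_norm]
    have := h c hc d hd hcd
    norm_num [δ] at *
    linarith
  have A_subset : A ⊆ ball (0 : EuclideanSpace ℝ (Fin n)) ρ := by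
    refine iUnion₂_subset fun x hx => ?_
    apply ball_subset_ball'
    rw [dist_zero_right, hs x hx]
    norm_num [δ, ρ]
  have I : (s.card : ENNReal) * ENNReal.ofReal (δ ^ n) * μ (ball 0 1) ≤
      ENNReal.ofReal (ρ ^ n) * μ (ball 0 1) :=
    calc
      (s.card : ENNReal) * ENNReal.ofReal (δ ^ n) * μ (ball 0 1) = μ A := by
        rw [hA, measure_biUnion_finset D fun c _ => measurableSet_ball]
        have I : 0 < δ := by norm_num [δ]
        simp only [μ.addHaar_ball_of_pos _ I]
        simp only [Finset.sum_const, nsmul_eq_mul, mul_assoc, finrank_euclideanSpace_fin]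
      _ ≤ μ (ball (0 : EuclideanSpace ℝ (Fin n)) ρ) := measure_mono A_subset
      _ = ENNReal.ofReal (ρ ^ n) * μ (ball 0 1) := by
        simp only [μ.addHaar_ball_of_pos _ ρpos, finrank_euclideanSpace_fin]
  have J : (s.card : ENNReal) * ENNReal.ofReal (δ ^ n) ≤ ENNReal.ofReal (ρ ^ n) :=
    (ENNReal.mul_le_mul_iff_left (measure_ball_pos _ _ zero_lt_one).ne' measure_ball_lt_top.ne).1 I
  have K : (s.card : ℝ) ≤ (801 : ℝ) ^ n := by
    have := ENNReal.toReal_le_of_le_ofReal (pow_nonneg ρpos.le _) J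
    rw [ENNReal.toReal_mul, ENNReal.toReal_ofReal (by positivity)] at this
    simp only [δ, ρ, div_pow, one_pow, ENNReal.toReal_natCast] at this
    rw [mul_one_div, div_le_div_iff_of_pos_right (by positivity)] at this
    exact this
  exact mod_cast K

lemma exists_net (n : ℕ) : ∃ s : Finset (EuclideanSpace ℝ (Fin n)), (∀ c ∈ s, ‖c‖ = 1) ∧
    s.card ≤ 801 ^ n ∧ ∀ x : EuclideanSpace ℝ (Fin n), ‖x‖ = 1 → ∃ c ∈ s, ‖x - c‖ ≤ 1/400 := by
  classical
  let P : Finset (EuclideanSpace ℝ (Fin n)) → Prop := fun s => (∀ c ∈ s, ‖c‖ = 1) ∧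
    (∀ c ∈ s, ∀ d ∈ s, c ≠ d → (1/400:ℝ) ≤ ‖c - d‖)
  let S : Set ℕ := {k | ∃ s, P s ∧ s.card = k}
  have hne : S.Nonempty := ⟨0, ∅, by simp [P], rfl⟩
  have hbd : BddAbove S := ⟨801 ^ n, by rintro k ⟨s, hs, rfl⟩; exact net_card s hs.1 hs.2⟩
  obtain ⟨s, hs, hcard⟩ := Nat.sSup_mem hne hbd
  refine ⟨s, hs.1, net_card s hs.1 hs.2, fun x hx => ?_⟩
  by_contra! hcon
  have hx' : x ∉ s := fun h => by
    have := hcon x h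
    simp at this
    linarith
  have : (insert x s).card ∈ S := by
    refine ⟨insert x s, ⟨?_, ?_⟩, rfl⟩
    · intro c hc
      rcases Finset.mem_insert.1 hc with rfl | hc
      · exact hx
      · exact hs.1 c hc
    · intro c hc d hd hcd
      rcases Finset.mem_insert.1 hc with hc | hc <;> rcases Finset.mem_insert.1 hd with hd | hd
      · exact absurd (hc.trans hd.symm) hcd
      · rw [hc]; exact (hcon d hd).le
      · rw [hd, norm_sub_rev]; exact (hcon c hc).le
      · exact hs.2 c hc d hd hcd
  have := le_csSup hbd this
  rw [Finset.card_insert_of_notMem hx'] at this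
  omega
noncomputable def sgn (b : Bool) : ℝ := if b then 1 else -1

noncomputable def sv {n : ℕ} (e : Fin n → Bool) : EuclideanSpace ℝ (Fin n) :=
  WithLp.toLp 2 (fun j => sgn (e j))

lemma sv_norm {n : ℕ} (e : Fin n → Bool) : ‖sv e‖ = Real.sqrt n := by
  rw [EuclideanSpace.norm_eq]
  congr 1
  have : ∀ j, ‖(sv e) j‖ ^ 2 = 1 := by
    intro j
    simp only [sv, sgn]
    split_ifs <;> simp
  rw [Finset.sum_congr rfl fun j _ => this j]
  simp

lemma sv_inner {n : ℕ} (e : Fin n → Bool) (x : EuclideanSpace ℝ (Fin n)) :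
    inner ℝ (sv e) x = ∑ j, sgn (e j) * x j := by
  simp [sv, PiLp.inner_apply, mul_comm]

lemma sum_prod_bool {n : ℕ} {R : Type*} [CommRing R] (f : Fin n → Bool → R) :
    ∑ e : Fin n → Bool, ∏ j, f j (e j) = ∏ j, (f j true + f j false) := by
  have := Finset.prod_univ_sum (fun _ : Fin n => (Finset.univ : Finset Bool)) f
  rw [Fintype.piFinset_univ] at this
  rw [← this]
  simp

lemma sum_exp {n : ℕ} (x : EuclideanSpace ℝ (Fin n)) :
    ∑ e : Fin n → Bool, Real.exp (inner ℝ (sv e) x) ≤ 2 ^ n * Real.exp (‖x‖ ^ 2 / 2) := by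
  have h : ∀ e : Fin n → Bool, Real.exp (inner ℝ (sv e) x) = ∏ j, Real.exp (sgn (e j) * x j) := by
    intro e
    rw [sv_inner, Real.exp_sum]
  simp_rw [h]
  rw [sum_prod_bool (fun j b => Real.exp (sgn b * x j))]
  have h2 : ∀ j, Real.exp (sgn true * x j) + Real.exp (sgn false * x j) ≤
      2 * Real.exp (x j ^ 2 / 2) := by
    intro j
    have := Real.cosh_le_exp_half_sq (x j)
    rw [Real.cosh_eq] at this
    simp [sgn]
    linarith
  refine (Finset.prod_le_prod (fun j _ => by positivity) (fun j _ => h2 j)).trans ?_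
  rw [Finset.prod_mul_distrib, ← Real.exp_sum, EuclideanSpace.norm_sq_eq]
  simp [Finset.sum_div]

lemma sum_exp_abs {n : ℕ} (x : EuclideanSpace ℝ (Fin n)) (hx : ‖x‖ = 1) :
    ∑ e : Fin n → Bool, Real.exp |inner ℝ (sv e) x| ≤ 2 ^ n * 4 := by
  have h1 := sum_exp x
  have h2 := sum_exp (-x)
  rw [norm_neg] at h2
  rw [hx] at h1 h2
  have h3 : Real.exp (1 ^ 2 / 2) ≤ 2 := by
    have := Real.exp_one_lt_d9
    have h : Real.exp (1^2/2) ^ 2 = Real.exp 1 := by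
      rw [← Real.exp_nat_mul]; norm_num
    nlinarith [Real.exp_pos (1^2/2)]
  have h4 : ∀ e : Fin n → Bool, Real.exp |inner ℝ (sv e) x| ≤
      Real.exp (inner ℝ (sv e) x) + Real.exp (inner ℝ (sv e) (-x)) := by
    intro e
    rw [inner_neg_right]
    rcases abs_cases (inner ℝ (sv e) x) with h | h <;> rw [h.1] <;>
      linarith [Real.exp_pos (inner ℝ (sv e) x), Real.exp_pos (-inner ℝ (sv e) x)]
  refine (Finset.sum_le_sum fun e _ => h4 e).trans ?_
  rw [Finset.sum_add_distrib]
  have : (0:ℝ) < 2 ^ n := by positivity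
  nlinarith

lemma sum_cos {n : ℕ} (x : EuclideanSpace ℝ (Fin n)) :
    ∑ e : Fin n → Bool, Real.cos (inner ℝ (sv e) x) = 2 ^ n * ∏ j, Real.cos (x j) := by
  have h := sum_prod_bool (fun (j : Fin n) b => Complex.exp (((sgn b * x j : ℝ) : ℂ) * Complex.I))
  have h1 : ∀ j, Complex.exp (((sgn true * x j : ℝ) : ℂ) * Complex.I) +
      Complex.exp (((sgn false * x j : ℝ) : ℂ) * Complex.I) = ((2 * Real.cos (x j) : ℝ) : ℂ) := by
    intro j
    simp [sgn, Complex.cos]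
    ring
  simp_rw [h1] at h
  rw [← Complex.ofReal_prod] at h
  have h2 := congrArg Complex.re h
  rw [Complex.ofReal_re, Complex.re_sum, Finset.prod_mul_distrib] at h2
  simp only [Finset.prod_const, Finset.card_univ, Fintype.card_fin] at h2
  rw [← h2]
  refine Finset.sum_congr rfl fun e _ => ?_
  rw [← Complex.exp_sum, ← Finset.sum_mul, ← Complex.ofReal_sum, Complex.exp_ofReal_mul_I_re,
    sv_inner]

lemma prod_cos {n : ℕ} (x : EuclideanSpace ℝ (Fin n)) (hx : ‖x‖ = 1) :
    ∏ j, Real.cos (x j) ≤ 5 / 6 := by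
  have hj : ∀ j, |x j| ≤ 1 := by
    intro j
    have := PiLp.norm_apply_le x j
    rwa [hx, Real.norm_eq_abs] at this
  have h1 : ∀ j, Real.cos (x j) ≤ Real.exp (- (x j ^ 2 / 5)) := by
    intro j
    have h2 := Real.cos_le_one_sub_mul_cos_sq (x := x j)
      ((hj j).trans (by linarith [Real.pi_gt_three]))
    have h3 : (1:ℝ) / 5 ≤ 2 / Real.pi ^ 2 := by
      rw [div_le_div_iff₀ (by norm_num) (by positivity)]
      nlinarith [Real.pi_lt_d2, Real.pi_pos]
    have h4 := Real.add_one_le_exp (-(x j ^ 2 / 5))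
    have h5 := mul_le_mul_of_nonneg_right h3 (sq_nonneg (x j))
    linarith
  have h0 : ∀ j, 0 ≤ Real.cos (x j) := by
    intro j
    have := abs_le.1 (hj j)
    apply Real.cos_nonneg_of_mem_Icc
    constructor <;> linarith [Real.pi_gt_three]
  refine (Finset.prod_le_prod (fun j _ => h0 j) (fun j _ => h1 j)).trans ?_
  rw [← Real.exp_sum, Finset.sum_neg_distrib, ← Finset.sum_div]
  have : ∑ j, x j ^ 2 = 1 := by
    have := EuclideanSpace.norm_sq_eq x
    rw [hx] at this
    simp at this
    exact this.symm
  rw [this, Real.exp_neg, inv_le_comm₀ (Real.exp_pos _) (by norm_num)]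
  have := Real.add_one_le_exp (1/5 : ℝ)
  linarith

lemma ptwise (y : ℝ) : Real.exp (-|y|) ≤ 1 - (1 - Real.cos y) / 4 := by
  rw [← Real.cos_abs y]
  set z := |y| with hz
  have hz0 : 0 ≤ z := abs_nonneg y
  have h1 := Real.one_sub_sq_div_two_le_cos (x := z)
  have h2 := Real.neg_one_le_cos z
  have h3 : Real.exp (-z) ≤ 1 / (1 + z) := by
    rw [Real.exp_neg, ← one_div]
    apply one_div_le_one_div_of_le (by linarith)
    linarith [Real.add_one_le_exp z]
  refine h3.trans ?_
  rw [div_le_iff₀ (by linarith)]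
  by_cases h : z ≤ 1
  · nlinarith
  · nlinarith

lemma sum_exp_neg {n : ℕ} (x : EuclideanSpace ℝ (Fin n)) (hx : ‖x‖ = 1) :
    ∑ e : Fin n → Bool, Real.exp (-|inner ℝ (sv e) x|) ≤ 2 ^ n * (23 / 24) := by
  refine (Finset.sum_le_sum fun e _ => ptwise _).trans ?_
  rw [Finset.sum_sub_distrib, ← Finset.sum_div, Finset.sum_sub_distrib, sum_cos]
  have := prod_cos x hx
  have h : (0:ℝ) < 2 ^ n := by positivity
  simp
  nlinarith

lemma exists_signs (n K : ℕ) (hn : 0 < n) (hK : (46/47 : ℝ) ^ K < 1 / 2000) :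
    ∃ X : Fin (K * n) → (Fin n → Bool), ∀ ξ : EuclideanSpace ℝ (Fin n),
      ((K * n : ℕ) : ℝ) / 100 * ‖ξ‖ ≤ ∑ i, |inner ℝ (sv (X i)) ξ| := by
  obtain ⟨s, hs1, hs2, hs3⟩ := exists_net n
  set N := K * n with hN
  let S : (Fin N → (Fin n → Bool)) → EuclideanSpace ℝ (Fin n) → ℝ :=
    fun X ξ => ∑ i, |inner ℝ (sv (X i)) ξ|
  have hup : ∀ c ∈ s, ∑ X : Fin N → (Fin n → Bool), Real.exp (S X c - 2 * N) ≤
      (2 ^ n * (46 / 47)) ^ N := by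
    intro c hc
    have h1 : ∀ X : Fin N → (Fin n → Bool), Real.exp (S X c - 2 * N) =
        ∏ i, (Real.exp |inner ℝ (sv (X i)) c| * Real.exp (-2)) := by
      intro X
      simp_rw [← Real.exp_add]
      rw [← Real.exp_sum, Finset.sum_add_distrib]
      simp [S]
      ring
    simp_rw [h1]
    rw [← Fintype.sum_pow (fun e : Fin n → Bool => Real.exp |inner ℝ (sv e) c| * Real.exp (-2)) N]
    apply pow_le_pow_left₀ (Finset.sum_nonneg fun _ _ => by positivity)
    rw [← Finset.sum_mul]
    refine (mul_le_mul_of_nonneg_right (sum_exp_abs c (hs1 c hc)) (Real.exp_pos _).le).trans ?_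
    rw [mul_assoc]
    apply mul_le_mul_of_nonneg_left _ (by positivity)
    have : Real.exp (-2) ≤ 1 / 6 := by
      rw [Real.exp_neg, inv_le_comm₀ (Real.exp_pos _) (by norm_num)]
      have h := Real.exp_one_gt_d9
      have h' : Real.exp 2 = Real.exp 1 ^ 2 := by rw [← Real.exp_nat_mul]; norm_num
      rw [h']
      nlinarith
    linarith
  have hlo : ∀ c ∈ s, ∑ X : Fin N → (Fin n → Bool), Real.exp (N / 48 - S X c) ≤
      (2 ^ n * (46 / 47)) ^ N := by
    intro c hc
    have h1 : ∀ X : Fin N → (Fin n → Bool), Real.exp (N / 48 - S X c) =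
        ∏ i, (Real.exp (-|inner ℝ (sv (X i)) c|) * Real.exp (1 / 48)) := by
      intro X
      simp_rw [← Real.exp_add]
      rw [← Real.exp_sum, Finset.sum_add_distrib]
      simp [S]
      ring
    simp_rw [h1]
    rw [← Fintype.sum_pow (fun e : Fin n → Bool => Real.exp (-|inner ℝ (sv e) c|) * Real.exp (1/48)) N]
    apply pow_le_pow_left₀ (Finset.sum_nonneg fun _ _ => by positivity)
    rw [← Finset.sum_mul]
    refine (mul_le_mul_of_nonneg_right (sum_exp_neg c (hs1 c hc)) (Real.exp_pos _).le).trans ?_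
    rw [mul_assoc]
    apply mul_le_mul_of_nonneg_left _ (by positivity)
    have : Real.exp (1/48) ≤ 48 / 47 := by
      have h := Real.add_one_le_exp (-(1/48) : ℝ)
      rw [Real.exp_neg] at h
      have h2 : (0:ℝ) < Real.exp (1/48) := Real.exp_pos _
      have h3 := mul_le_mul_of_nonneg_right h h2.le
      rw [inv_mul_cancel₀ h2.ne'] at h3
      linarith
    linarith
  have htot : ∑ X : Fin N → (Fin n → Bool),
      ∑ c ∈ s, (Real.exp (S X c - 2 * N) + Real.exp (N / 48 - S X c)) <
      ∑ X : Fin N → (Fin n → Bool), (1 : ℝ) := by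
    rw [Finset.sum_comm]
    have h1 : ∀ c ∈ s, ∑ X : Fin N → (Fin n → Bool),
        (Real.exp (S X c - 2 * N) + Real.exp (N / 48 - S X c)) ≤ 2 * (2 ^ n * (46 / 47)) ^ N := by
      intro c hc
      rw [Finset.sum_add_distrib]
      linarith [hup c hc, hlo c hc]
    refine (Finset.sum_le_sum h1).trans_lt ?_
    rw [Finset.sum_const, nsmul_eq_mul]
    simp only [Finset.sum_const, Finset.card_univ, Fintype.card_fun, Fintype.card_fin,
      Fintype.card_bool, nsmul_eq_mul, mul_one]
    push_cast
    rw [mul_pow]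
    have h2 : (s.card : ℝ) ≤ 801 ^ n := by exact_mod_cast hs2
    have h3 : (46/47 : ℝ) ^ N ≤ (1/2000) ^ n := by
      rw [hN, pow_mul]
      exact pow_le_pow_left₀ (by positivity) hK.le n
    have h4 : (801:ℝ) ^ n * (1/2000) ^ n < 1 / 2 := by
      rw [← mul_pow]
      calc ((801:ℝ) * (1/2000)) ^ n ≤ (801 * (1/2000)) ^ 1 :=
            pow_le_pow_of_le_one (by norm_num) (by norm_num) hn
        _ < 1 / 2 := by norm_num
    have h5 : (s.card : ℝ) * (46/47) ^ N ≤ 801 ^ n * (1/2000) ^ n := by gcongr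
    have h6 : (0:ℝ) < (2 ^ n) ^ N := by positivity
    nlinarith
  obtain ⟨X, -, hX⟩ := Finset.exists_lt_of_sum_lt htot
  refine ⟨X, ?_⟩
  have hc : ∀ c ∈ s, S X c ≤ 2 * N ∧ N / 48 ≤ S X c := by
    intro c hc
    have h1 := Finset.single_le_sum (f := fun c => Real.exp (S X c - 2 * N) + Real.exp (N / 48 - S X c))
      (fun c _ => by positivity) hc
    have h2 := h1.trans_lt hX
    have h3 : Real.exp (S X c - 2 * N) < 1 := by linarith [Real.exp_pos (N / 48 - S X c)]
    have h4 : Real.exp (N / 48 - S X c) < 1 := by linarith [Real.exp_pos (S X c - 2 * N)]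
    rw [Real.exp_lt_one_iff] at h3 h4
    constructor <;> linarith
  have hadd : ∀ x y, S X (x + y) ≤ S X x + S X y := by
    intro x y
    simp only [S]
    rw [← Finset.sum_add_distrib]
    exact Finset.sum_le_sum fun i _ => by rw [inner_add_right]; exact abs_add_le _ _
  have hsmul : ∀ (r : ℝ) x, S X (r • x) = |r| * S X x := by
    intro r x
    simp only [S]
    rw [Finset.mul_sum]
    exact Finset.sum_congr rfl fun i _ => by rw [inner_smul_right, abs_mul]
  have hcont : Continuous (S X) := by
    simp only [S]
    fun_prop
  -- nonempty sphere
  have : Nonempty (Fin n) := ⟨⟨0, hn⟩⟩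
  have hsne : (sphere (0 : EuclideanSpace ℝ (Fin n)) 1).Nonempty :=
    NormedSpace.sphere_nonempty.2 zero_le_one
  obtain ⟨ξ0, hξ0, hmax⟩ := (isCompact_sphere (0 : EuclideanSpace ℝ (Fin n)) 1).exists_isMaxOn hsne
    hcont.continuousOn
  set A := S X ξ0 with hA
  have hA0 : 0 ≤ A := Finset.sum_nonneg fun _ _ => abs_nonneg _
  have hbound : ∀ x, S X x ≤ A * ‖x‖ := by
    intro x
    by_cases hx : x = 0
    · subst hx
      simp [S]
    · have hx' : 0 < ‖x‖ := norm_pos_iff.2 hx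
      have h1 : S X (‖x‖⁻¹ • x) ≤ A := hmax (by
        rw [mem_sphere_zero_iff_norm, norm_smul, norm_inv, norm_norm, inv_mul_cancel₀ hx'.ne'])
      rw [hsmul, abs_of_pos (by positivity), inv_mul_le_iff₀ hx'] at h1
      linarith
  have hA4 : A ≤ 4 * N := by
    obtain ⟨c, hcs, hcd⟩ := hs3 ξ0 (mem_sphere_zero_iff_norm.1 hξ0)
    have h1 := hadd c (ξ0 - c)
    rw [add_sub_cancel] at h1
    have h2 := hbound (ξ0 - c)
    have h3 := (hc c hcs).1
    have h4 := mul_le_mul_of_nonneg_left hcd hA0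
    linarith
  have hunit : ∀ x, ‖x‖ = 1 → (N:ℝ) / 100 ≤ S X x := by
    intro x hx
    obtain ⟨c, hcs, hcd⟩ := hs3 x hx
    have h1 := hadd x (c - x)
    rw [add_sub_cancel] at h1
    have h2 := hbound (c - x)
    rw [norm_sub_rev] at h2
    have h3 := (hc c hcs).2
    have h4 := mul_le_mul_of_nonneg_left hcd hA0
    have : (0:ℝ) ≤ N := by positivity
    linarith
  intro x
  by_cases hx : x = 0
  · subst hx
    simp
  · have hx' : 0 < ‖x‖ := norm_pos_iff.2 hx
    have h1 := hunit (‖x‖⁻¹ • x) (by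
        rw [norm_smul, norm_inv, norm_norm, inv_mul_cancel₀ hx'.ne'])
    rw [hsmul, abs_of_pos (by positivity), inv_mul_eq_div, le_div_iff₀ hx'] at h1
    exact h1

lemma maurey {n : ℕ} {ι : Type*} (y : ι → EuclideanSpace ℝ (Fin n)) (R : ℝ)
    (hy : ∀ i, ‖y i‖ ≤ R) (x : EuclideanSpace ℝ (Fin n)) (hx : x ∈ convexHull ℝ (range y)) (k : ℕ) :
    ∃ m : Sym ι k, ‖((m : Multiset ι).map y).sum - (k : ℝ) • x‖ ^ 2 ≤ k * (2 * R) ^ 2 := by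
  have hxR : ‖x‖ ≤ R := by
    have h : convexHull ℝ (range y) ⊆ closedBall 0 R := by
      apply convexHull_min _ (convex_closedBall 0 R)
      rintro _ ⟨i, rfl⟩
      simpa using hy i
    simpa using h hx
  induction k with
  | zero => exact ⟨Sym.nil, by simp⟩
  | succ k ih =>
    obtain ⟨m, hm⟩ := ih
    set S := ((m : Multiset ι).map y).sum - (k : ℝ) • x with hS
    have : ∃ i, inner ℝ S (y i - x) ≤ 0 := by
      by_contra! hcon
      have hconv : Convex ℝ {z : EuclideanSpace ℝ (Fin n) | inner ℝ S x < inner ℝ S z} :=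
        convex_halfSpace_gt (innerₛₗ ℝ S).isLinear _
      have h : convexHull ℝ (range y) ⊆ {z | inner ℝ S x < inner ℝ S z} := by
        apply convexHull_min _ hconv
        rintro _ ⟨i, rfl⟩
        have := hcon i
        rw [inner_sub_right] at this
        simp only [mem_ofPred_eq]
        linarith
      have := h hx
      simp at this
    obtain ⟨i, hi⟩ := this
    refine ⟨i ::ₛ m, ?_⟩
    have he : (((i ::ₛ m : Sym ι (k+1)) : Multiset ι).map y).sum - ((k + 1 : ℕ) : ℝ) • x
        = S + (y i - x) := by
      rw [Sym.coe_cons, Multiset.map_cons, Multiset.sum_cons, hS]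
      push_cast
      rw [add_smul, one_smul]
      abel
    rw [he, norm_add_sq_real]
    have h1 : ‖y i - x‖ ≤ 2 * R := (norm_sub_le _ _).trans (by linarith [hy i])
    have h2 : ‖y i - x‖ ^ 2 ≤ (2 * R) ^ 2 := pow_le_pow_left₀ (norm_nonneg _) h1 2
    push_cast
    linarith

lemma volume_hull {n : ℕ} (hn : 0 < n) {ι : Type*} [Fintype ι] (y : ι → EuclideanSpace ℝ (Fin n))
    (hy : ∀ i, ‖y i‖ ≤ Real.sqrt n) :
    volume (convexHull ℝ (range y)) ≤ (2 ^ (Fintype.card ι + n) : ℕ) *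
      volume (closedBall (0 : EuclideanSpace ℝ (Fin n)) 2) := by
  classical
  have hn' : (0:ℝ) < n := by exact_mod_cast hn
  have hcov : convexHull ℝ (range y) ⊆
      ⋃ m : Sym ι n, closedBall ((n : ℝ)⁻¹ • ((m : Multiset ι).map y).sum) 2 := by
    intro x hx
    obtain ⟨m, hm⟩ := maurey y _ hy x hx n
    refine mem_iUnion.2 ⟨m, ?_⟩
    rw [mem_closedBall, dist_comm, dist_eq_norm]
    have h1 : (n : ℝ)⁻¹ • ((m : Multiset ι).map y).sum - x =
        (n : ℝ)⁻¹ • (((m : Multiset ι).map y).sum - (n : ℝ) • x) := by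
      rw [smul_sub, smul_smul, inv_mul_cancel₀ hn'.ne', one_smul]
    rw [h1, norm_smul, norm_inv, Real.norm_of_nonneg hn'.le, inv_mul_le_iff₀ hn']
    rw [mul_pow, Real.sq_sqrt hn'.le] at hm
    apply le_of_sq_le_sq _ (by positivity)
    linarith
  refine (measure_mono hcov).trans ((measure_iUnion_le _).trans ?_)
  rw [tsum_fintype]
  simp_rw [Measure.addHaar_closedBall_center]
  rw [Finset.sum_const, nsmul_eq_mul, Finset.card_univ]
  gcongr
  rw [Sym.card_sym_eq_choose]
  exact (Nat.choose_le_two_pow _ _).trans (Nat.pow_le_pow_right (by norm_num) (by omega))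

lemma gauss_int {n : ℕ} (c : ℝ) (w : EuclideanSpace ℝ (Fin n)) :
    ∫⁻ v : EuclideanSpace ℝ (Fin n), ENNReal.ofReal (Real.exp (-Real.pi * ‖v‖ ^ 2 + c * inner ℝ w v))
      = ENNReal.ofReal (Real.exp (c ^ 2 * ‖w‖ ^ 2 / (4 * Real.pi))) := by
  have hpi : 0 < ((Real.pi : ℂ)).re := by simpa using Real.pi_pos
  have h1 := GaussianFourier.integral_cexp_neg_mul_sq_norm_add hpi (c : ℂ) w
  have h2 := GaussianFourier.integrable_cexp_neg_mul_sq_norm_add hpi (c : ℂ) w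
  have he : ∀ v : EuclideanSpace ℝ (Fin n),
      Complex.exp (-(Real.pi : ℂ) * (‖v‖ : ℂ) ^ 2 + (c : ℂ) * ((inner ℝ w v : ℝ) : ℂ)) =
      ((Real.exp (-Real.pi * ‖v‖ ^ 2 + c * inner ℝ w v) : ℝ) : ℂ) := by
    intro v
    push_cast
    rfl
  simp_rw [he] at h1 h2
  have h3 : Integrable (fun v : EuclideanSpace ℝ (Fin n) =>
      Real.exp (-Real.pi * ‖v‖ ^ 2 + c * inner ℝ w v)) := by
    exact h2.re
  rw [integral_complex_ofReal, div_self (by exact_mod_cast Real.pi_ne_zero), Complex.one_cpow,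
    one_mul] at h1
  rw [← ofReal_integral_eq_lintegral_ofReal h3 (Filter.Eventually.of_forall fun v => (Real.exp_pos _).le)]
  congr 1
  exact_mod_cast h1

lemma gauss_one (n : ℕ) :
    ∫⁻ v : EuclideanSpace ℝ (Fin n), ENNReal.ofReal (Real.exp (-Real.pi * ‖v‖ ^ 2)) = 1 := by
  simpa using gauss_int 0 (0 : EuclideanSpace ℝ (Fin n))

lemma volume_ball_two {n : ℕ} (hn : 0 < n) :
    volume (closedBall (0 : EuclideanSpace ℝ (Fin n)) 2) ≤
      ENNReal.ofReal ((2 * Real.exp Real.pi / Real.sqrt n) ^ n) := by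
  have hn' : (0:ℝ) < Real.sqrt n := Real.sqrt_pos.2 (by exact_mod_cast hn)
  have h1 : volume (closedBall (0 : EuclideanSpace ℝ (Fin n)) (Real.sqrt n)) ≤
      ENNReal.ofReal (Real.exp Real.pi ^ n) := by
    have h2 : ENNReal.ofReal (Real.exp (-Real.pi * n)) *
        volume (closedBall (0 : EuclideanSpace ℝ (Fin n)) (Real.sqrt n)) ≤ 1 := by
      rw [← gauss_one n, ← setLIntegral_const]
      refine (setLIntegral_mono' measurableSet_closedBall fun x hx => ?_).trans
        (setLIntegral_le_lintegral _ _)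
      apply ENNReal.ofReal_le_ofReal
      apply Real.exp_le_exp.2
      have hx' : ‖x‖ ≤ Real.sqrt n := by simpa using hx
      have : ‖x‖ ^ 2 ≤ n := by
        rw [← Real.sq_sqrt (Nat.cast_nonneg n)]
        exact pow_le_pow_left₀ (norm_nonneg _) hx' 2
      nlinarith [Real.pi_pos]
    have h3 : Real.exp Real.pi ^ n = (Real.exp (-Real.pi * n))⁻¹ := by
      rw [← Real.exp_neg, ← Real.exp_nat_mul]
      congr 1
      ring
    rw [h3, ENNReal.ofReal_inv_of_pos (Real.exp_pos _)]
    rw [mul_comm] at h2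
    rwa [ENNReal.le_inv_iff_mul_le]
  have h4 : volume (closedBall (0 : EuclideanSpace ℝ (Fin n)) 2) =
      ENNReal.ofReal ((2 / Real.sqrt n) ^ n) *
        volume (closedBall (0 : EuclideanSpace ℝ (Fin n)) (Real.sqrt n)) := by
    rw [Measure.addHaar_closedBall _ _ (by norm_num), Measure.addHaar_closedBall _ _ hn'.le,
      ← mul_assoc, ← ENNReal.ofReal_mul (by positivity), finrank_euclideanSpace_fin, ← mul_pow,
      div_mul_cancel₀ _ hn'.ne']
  rw [h4]
  refine (mul_le_mul_right h1 _).trans ?_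
  rw [← ENNReal.ofReal_mul (by positivity), ← mul_pow, div_mul_eq_mul_div]

lemma gauss_moment {n : ℕ} (p : ℝ) (hp : 1 ≤ p) (w : EuclideanSpace ℝ (Fin n)) :
    ∫⁻ v : EuclideanSpace ℝ (Fin n), ENNReal.ofReal (Real.exp (-Real.pi * ‖v‖ ^ 2)) *
      ENNReal.ofReal (|inner ℝ w v| ^ p) ≤ ENNReal.ofReal ((6 * Real.sqrt p * ‖w‖) ^ p) := by
  have hp0 : 0 < p := by linarith
  by_cases hw : w = 0
  · subst hw
    simp [Real.zero_rpow hp0.ne']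
  have hw' : 0 < ‖w‖ := norm_pos_iff.2 hw
  have hsp : 0 < Real.sqrt p := Real.sqrt_pos.2 hp0
  have hss : Real.sqrt p * Real.sqrt p = p := Real.mul_self_sqrt hp0.le
  set l := Real.sqrt p / ‖w‖ with hl
  have hl0 : 0 < l := by positivity
  have hpt : ∀ y : ℝ, |y| ^ p ≤ (Real.sqrt p * ‖w‖) ^ p * (Real.exp (l * y) + Real.exp (-l * y)) := by
    intro y
    have h1 : |y| ≤ (Real.sqrt p * ‖w‖) * Real.exp (l * |y| / p) := by
      have h2 : l * |y| / p ≤ Real.exp (l * |y| / p) := by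
        linarith [Real.add_one_le_exp (l * |y| / p)]
      have h3 : |y| = (Real.sqrt p * ‖w‖) * (l * |y| / p) := by
        rw [hl]
        field_simp
        rw [sq, hss]
      calc |y| = (Real.sqrt p * ‖w‖) * (l * |y| / p) := h3
        _ ≤ _ := by gcongr
    have h4 := Real.rpow_le_rpow (abs_nonneg y) h1 hp0.le
    rw [Real.mul_rpow (by positivity) (Real.exp_pos _).le, ← Real.exp_mul,
      div_mul_cancel₀ _ hp0.ne'] at h4
    refine h4.trans ?_
    gcongr
    rcases abs_cases y with h | h <;> rw [h.1]
    · linarith [Real.exp_pos (-l * y)]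
    · rw [mul_neg, ← neg_mul]
      linarith [Real.exp_pos (l * y)]
  have hpt2 : ∀ v : EuclideanSpace ℝ (Fin n), ENNReal.ofReal (Real.exp (-Real.pi * ‖v‖ ^ 2)) *
      ENNReal.ofReal (|inner ℝ w v| ^ p) ≤ ENNReal.ofReal ((Real.sqrt p * ‖w‖) ^ p) *
        (ENNReal.ofReal (Real.exp (-Real.pi * ‖v‖ ^ 2 + l * inner ℝ w v)) +
        ENNReal.ofReal (Real.exp (-Real.pi * ‖v‖ ^ 2 + (-l) * inner ℝ w v))) := by
    intro v
    rw [← ENNReal.ofReal_mul (Real.exp_pos _).le, ← ENNReal.ofReal_add (Real.exp_pos _).le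
      (Real.exp_pos _).le, ← ENNReal.ofReal_mul (by positivity)]
    apply ENNReal.ofReal_le_ofReal
    have := mul_le_mul_of_nonneg_left (hpt (inner ℝ w v)) (Real.exp_pos (-Real.pi * ‖v‖ ^ 2)).le
    refine this.trans (le_of_eq ?_)
    rw [Real.exp_add, Real.exp_add]
    ring
  refine (lintegral_mono hpt2).trans ?_
  rw [lintegral_const_mul _ (by fun_prop), lintegral_add_left (by fun_prop), gauss_int, gauss_int,
    ← ENNReal.ofReal_add (Real.exp_pos _).le (Real.exp_pos _).le, ← ENNReal.ofReal_mul (by positivity)]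
  apply ENNReal.ofReal_le_ofReal
  rw [mul_assoc 6, Real.mul_rpow (x := 6) (by norm_num) (by positivity), mul_comm ((6:ℝ) ^ p)]
  apply mul_le_mul_of_nonneg_left _ (by positivity)
  have h1 : (-l) ^ 2 * ‖w‖ ^ 2 / (4 * Real.pi) = p / (4 * Real.pi) := by
    rw [neg_sq, hl, div_pow, div_mul_cancel₀ _ (by positivity), sq, hss]
  have h2 : l ^ 2 * ‖w‖ ^ 2 / (4 * Real.pi) = p / (4 * Real.pi) := by
    rw [← h1, neg_sq]
  rw [h1, h2]
  have h3 : p / (4 * Real.pi) ≤ p := div_le_self hp0.le (by linarith [Real.pi_gt_three])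
  have h4 : Real.exp (p / (4 * Real.pi)) ≤ (3:ℝ) ^ p := by
    refine (Real.exp_le_exp.2 h3).trans ?_
    rw [← Real.exp_one_rpow]
    apply Real.rpow_le_rpow (Real.exp_pos _).le _ hp0.le
    linarith [Real.exp_one_lt_d9]
  have h5 : (2:ℝ) ≤ 2 ^ p := by
    calc (2:ℝ) = 2 ^ (1:ℝ) := by simp
      _ ≤ 2 ^ p := Real.rpow_le_rpow_of_exponent_le (by norm_num) hp
  have h6 : (6:ℝ) ^ p = 2 ^ p * 3 ^ p := by
    rw [← Real.mul_rpow (by norm_num) (by norm_num)]; norm_num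
  rw [h6]
  nlinarith [Real.exp_pos (p / (4 * Real.pi))]


/-- Averaging against the Gaussian density. -/
lemma avg_bound {n N : ℕ} (hN : 0 < N) (x : Fin N → EuclideanSpace ℝ (Fin n))
    (hx : ∀ ξ, (N : ℝ) / 100 * ‖ξ‖ ≤ ∑ i, |inner ℝ (x i) ξ|)
    {α : Type*} [MeasurableSpace α] (μ : Measure α) [SFinite μ] (w : α → EuclideanSpace ℝ (Fin n))
    (hw : Measurable w) (p : ℝ) (hp : 1 ≤ p)
    (hG : ∀ i, ∫⁻ t, ENNReal.ofReal (|inner ℝ (w t) (x i)| ^ p) ∂μ ≤ 1) :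
    ∫⁻ v : EuclideanSpace ℝ (Fin n), ENNReal.ofReal (Real.exp (-Real.pi * ‖v‖ ^ 2)) *
      ∫⁻ t, ENNReal.ofReal (|inner ℝ (w t) v| ^ p) ∂μ ≤ ENNReal.ofReal ((600 * Real.sqrt p) ^ p) := by
  have hp0 : 0 < p := by linarith
  have hN' : (0:ℝ) < N := by exact_mod_cast hN
  have hpt : ∀ t, ENNReal.ofReal ((6 * Real.sqrt p * ‖w t‖) ^ p) ≤
      ENNReal.ofReal ((600 * Real.sqrt p) ^ p * (N:ℝ)⁻¹) *
        ∑ i, ENNReal.ofReal (|inner ℝ (w t) (x i)| ^ p) := by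
    intro t
    rw [← ENNReal.ofReal_sum_of_nonneg (fun i _ => by positivity),
      ← ENNReal.ofReal_mul (by positivity)]
    apply ENNReal.ofReal_le_ofReal
    have h1 : N * ‖w t‖ ≤ 100 * ∑ i, |inner ℝ (w t) (x i)| := by
      have := hx (w t)
      simp_rw [real_inner_comm (w t)] at this
      linarith
    have h2 : (N * ‖w t‖) ^ p ≤ 100 ^ p * ((N:ℝ) ^ (p - 1) * ∑ i, |inner ℝ (w t) (x i)| ^ p) := by
      refine (Real.rpow_le_rpow (by positivity) h1 hp0.le).trans ?_
      rw [Real.mul_rpow (by norm_num) (Finset.sum_nonneg fun _ _ => abs_nonneg _)]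
      apply mul_le_mul_of_nonneg_left _ (by positivity)
      have := Real.rpow_sum_le_const_mul_sum_rpow (Finset.univ : Finset (Fin N))
        (fun i => inner ℝ (w t) (x i)) hp
      simpa using this
    rw [Real.mul_rpow (by positivity) (by positivity), Real.rpow_sub_one hN'.ne'] at h2
    have hNp : (0:ℝ) < (N:ℝ) ^ p := by positivity
    have h3 : ‖w t‖ ^ p ≤ 100 ^ p * ((N:ℝ)⁻¹ * ∑ i, |inner ℝ (w t) (x i)| ^ p) := by
      refine le_of_mul_le_mul_left (h2.trans (le_of_eq ?_)) hNp
      ring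
    rw [Real.mul_rpow (by positivity) (by positivity)]
    have h4 : (600 * Real.sqrt p) ^ p = (6 * Real.sqrt p) ^ p * 100 ^ p := by
      rw [← Real.mul_rpow (by positivity) (by positivity)]
      congr 1
      ring
    rw [h4]
    refine (mul_le_mul_of_nonneg_left h3 (by positivity)).trans (le_of_eq ?_)
    ring
  have hm1 : Measurable fun q : EuclideanSpace ℝ (Fin n) × α =>
      ENNReal.ofReal (Real.exp (-Real.pi * ‖q.1‖ ^ 2)) * ENNReal.ofReal (|inner ℝ (w q.2) q.1| ^ p) := by
    fun_prop
  calc ∫⁻ v : EuclideanSpace ℝ (Fin n), ENNReal.ofReal (Real.exp (-Real.pi * ‖v‖ ^ 2)) *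
      ∫⁻ t, ENNReal.ofReal (|inner ℝ (w t) v| ^ p) ∂μ
      = ∫⁻ v : EuclideanSpace ℝ (Fin n), ∫⁻ t, ENNReal.ofReal (Real.exp (-Real.pi * ‖v‖ ^ 2)) *
        ENNReal.ofReal (|inner ℝ (w t) v| ^ p) ∂μ := by
        refine lintegral_congr fun v => ?_
        rw [lintegral_const_mul _ (by fun_prop)]
    _ = ∫⁻ t, (∫⁻ v : EuclideanSpace ℝ (Fin n), ENNReal.ofReal (Real.exp (-Real.pi * ‖v‖ ^ 2)) *
        ENNReal.ofReal (|inner ℝ (w t) v| ^ p)) ∂μ := lintegral_lintegral_swap hm1.aemeasurable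
    _ ≤ ∫⁻ t, ENNReal.ofReal ((6 * Real.sqrt p * ‖w t‖) ^ p) ∂μ :=
        lintegral_mono fun t => gauss_moment p hp (w t)
    _ ≤ ∫⁻ t, ENNReal.ofReal ((600 * Real.sqrt p) ^ p * (N:ℝ)⁻¹) *
        ∑ i, ENNReal.ofReal (|inner ℝ (w t) (x i)| ^ p) ∂μ := lintegral_mono hpt
    _ = ENNReal.ofReal ((600 * Real.sqrt p) ^ p * (N:ℝ)⁻¹) *
        ∑ i, ∫⁻ t, ENNReal.ofReal (|inner ℝ (w t) (x i)| ^ p) ∂μ := by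
        rw [lintegral_const_mul _ (by fun_prop), lintegral_finsetSum _ (fun i _ => by fun_prop)]
    _ ≤ ENNReal.ofReal ((600 * Real.sqrt p) ^ p * (N:ℝ)⁻¹) * ∑ i : Fin N, 1 := by
        gcongr with i
        exact hG i
    _ = ENNReal.ofReal ((600 * Real.sqrt p) ^ p) := by
        rw [Finset.sum_const, Finset.card_univ, Fintype.card_fin, nsmul_eq_mul, mul_one,
          ← ENNReal.ofReal_natCast, ← ENNReal.ofReal_mul (by positivity),
          inv_mul_cancel_right₀ hN'.ne']

/-- Representation of the norm of a finite dimensional subspace of `L_p`. -/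
lemma lp_repr {n : ℕ} (p : ℝ) (hp : 1 ≤ p) (μ : Measure ℝ)
    (f : EuclideanSpace ℝ (Fin n) →ₗ[ℝ] Lp ℝ (ENNReal.ofReal p) μ) :
    ∃ w : ℝ → EuclideanSpace ℝ (Fin n), Measurable w ∧ ∀ x,
      ∫⁻ t, ENNReal.ofReal (|inner ℝ (w t) x| ^ p) ∂μ = ENNReal.ofReal (‖f x‖ ^ p) := by
  have hp0 : 0 < p := by linarith
  let b := EuclideanSpace.basisFun (Fin n) ℝ
  let w : ℝ → EuclideanSpace ℝ (Fin n) := fun t => WithLp.toLp 2 (fun j => (f (b j)) t)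
  refine ⟨w, ?_, fun x => ?_⟩
  · apply (WithLp.measurable_toLp 2 _).comp
    exact measurable_pi_lambda _ fun j => (Lp.stronglyMeasurable (f (b j))).measurable
  · have h1 : f x = ∑ j, x j • f (b j) := by
      conv_lhs => rw [← b.sum_repr x]
      rw [map_sum]
      simp [b]
    have h2 : (fun t => inner ℝ (w t) x) =ᵐ[μ] (f x : ℝ → ℝ) := by
      rw [h1]
      have h3 : ∀ᵐ t ∂μ, ∀ j, (x j • f (b j) : Lp ℝ (ENNReal.ofReal p) μ) t = x j * (f (b j)) t := by
        rw [ae_all_iff]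
        intro j
        filter_upwards [Lp.coeFn_smul (x j) (f (b j))] with t ht
        rw [ht]; rfl
      filter_upwards [h3, Lp.coeFn_finsetSum Finset.univ (fun j => x j • f (b j))] with t h3 h4
      rw [h4, Finset.sum_apply]
      simp [h3, w, PiLp.inner_apply]
    have h5 : ∫⁻ t, ENNReal.ofReal (|inner ℝ (w t) x| ^ p) ∂μ = ∫⁻ t, ‖(f x) t‖ₑ ^ p ∂μ := by
      refine lintegral_congr_ae ?_
      filter_upwards [h2] with t ht
      rw [ht, ← Real.norm_eq_abs, ← ENNReal.ofReal_rpow_of_nonneg (norm_nonneg _) hp0.le,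
        ofReal_norm]
    rw [h5]
    have h6 : eLpNorm (f x) (ENNReal.ofReal p) μ ≠ ⊤ := Lp.eLpNorm_ne_top _
    rw [Lp.norm_def, ← ENNReal.ofReal_rpow_of_nonneg ENNReal.toReal_nonneg hp0.le,
      ENNReal.ofReal_toReal h6, eLpNorm_eq_lintegral_rpow_enorm_toReal (by simpa using hp0) (by simp),
      ENNReal.toReal_ofReal hp0.le, ← ENNReal.rpow_mul, one_div_mul_cancel hp0.ne', ENNReal.rpow_one]

open Pointwise in
lemma volume_D {n N : ℕ} (hN : 0 < N) (x : Fin N → EuclideanSpace ℝ (Fin n))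
    (hx : ∀ ξ, (N : ℝ) / 100 * ‖ξ‖ ≤ ∑ i, |inner ℝ (x i) ξ|) (p : ℝ) (hp : 1 ≤ p)
    (D : Set (EuclideanSpace ℝ (Fin n))) (hD : IsLpBallImage n p D) (hxD : ∀ i, x i ∈ D) :
    1 / 2 ≤ (1200 * Real.sqrt p) ^ n * (volume D).toReal := by
  have hp0 : 0 < p := by linarith
  obtain ⟨V, -, T, hDT⟩ := hD
  have : Fact (1 ≤ ENNReal.ofReal p) := ⟨by simpa using hp⟩
  have : FiniteDimensional ℝ V := T.symm.finiteDimensional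
  have : ProperSpace V := FiniteDimensional.proper ℝ V
  let f : EuclideanSpace ℝ (Fin n) →ₗ[ℝ] Lp ℝ (ENNReal.ofReal p) (volume.restrict (Set.Icc (0:ℝ) 1)) :=
    V.subtype ∘ₗ T.symm.toLinearMap
  have hfc : Continuous f := f.continuous_of_finiteDimensional
  have hDf : D = {v | ‖f v‖ ≤ 1} := by
    rw [hDT]
    ext v
    constructor
    · rintro ⟨u, hu, rfl⟩
      simpa [f] using hu
    · intro hv
      exact ⟨T.symm v, hv, by simp⟩
  have hDc : IsCompact D := by
    have h1 : D = T.toContinuousLinearEquiv '' (closedBall (0 : V) 1) := by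
      rw [hDT]
      ext v
      simp
    rw [h1]
    exact (isCompact_closedBall _ _).image T.toContinuousLinearEquiv.continuous
  obtain ⟨w, hw, hwf⟩ := lp_repr p hp (volume.restrict (Set.Icc (0:ℝ) 1)) f
  have havg := avg_bound hN x hx (volume.restrict (Set.Icc (0:ℝ) 1)) w hw p hp (by
    intro i
    rw [hwf, ← ENNReal.ofReal_one]
    apply ENNReal.ofReal_le_ofReal
    have h := hxD i
    rw [hDf] at h
    exact Real.rpow_le_one (norm_nonneg _) h hp0.le)
  simp_rw [hwf] at havg
  set R := 600 * Real.sqrt p with hR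
  have hR0 : 0 < R := by have := Real.sqrt_pos.2 hp0; positivity
  set A : Set (EuclideanSpace ℝ (Fin n)) := {v | ‖f v‖ ≤ 2 * R} with hA
  have hAm : MeasurableSet A := (isClosed_le (by fun_prop) continuous_const).measurableSet
  have hcompl : ∫⁻ v in Aᶜ, ENNReal.ofReal (Real.exp (-Real.pi * ‖v‖ ^ 2)) ≤ ENNReal.ofReal (1/2) := by
    have h1 : ENNReal.ofReal (2 * R ^ p) *
        ∫⁻ v in Aᶜ, ENNReal.ofReal (Real.exp (-Real.pi * ‖v‖ ^ 2)) ≤ ENNReal.ofReal (R ^ p) := by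
      refine le_trans ?_ havg
      rw [← lintegral_const_mul _ (by fun_prop)]
      refine (setLIntegral_mono' hAm.compl fun v hv => ?_).trans (setLIntegral_le_lintegral _ _)
      rw [mul_comm]
      gcongr
      have hv' : 2 * R ≤ ‖f v‖ := by
        have : ¬ (‖f v‖ ≤ 2 * R) := hv
        linarith
      refine le_trans ?_ (Real.rpow_le_rpow (by positivity) hv' hp0.le)
      rw [Real.mul_rpow (by norm_num) hR0.le]
      gcongr
      calc (2:ℝ) = 2 ^ (1:ℝ) := by simp
        _ ≤ 2 ^ p := Real.rpow_le_rpow_of_exponent_le (by norm_num) hp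
    have hRp : 0 < R ^ p := by positivity
    have h2 : ENNReal.ofReal (R ^ p) = ENNReal.ofReal (2 * R ^ p) * ENNReal.ofReal (1/2) := by
      rw [← ENNReal.ofReal_mul (by positivity)]
      congr 1
      ring
    rw [h2] at h1
    refine (ENNReal.mul_le_mul_iff_right ?_ ENNReal.ofReal_ne_top).1 h1
    simpa using hRp
  have hAv : ∫⁻ v in A, ENNReal.ofReal (Real.exp (-Real.pi * ‖v‖ ^ 2)) ≤ volume A := by
    rw [← setLIntegral_one]
    refine setLIntegral_mono' hAm fun v _ => ?_
    rw [← ENNReal.ofReal_one]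
    apply ENNReal.ofReal_le_ofReal
    rw [Real.exp_le_one_iff]
    nlinarith [Real.pi_pos, sq_nonneg ‖v‖]
  have hsum := lintegral_add_compl (μ := volume)
    (fun v : EuclideanSpace ℝ (Fin n) => ENNReal.ofReal (Real.exp (-Real.pi * ‖v‖ ^ 2))) hAm
  rw [gauss_one] at hsum
  have hAsmul : A = (2 * R) • D := by
    ext v
    rw [mem_smul_set_iff_inv_smul_mem₀ (by positivity), hDf, hA]
    simp only [mem_ofPred_eq]
    rw [map_smul, norm_smul, norm_inv, Real.norm_of_nonneg (by positivity),
      inv_mul_le_iff₀ (by positivity), mul_one]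
  have hvolA : volume A = ENNReal.ofReal ((2 * R) ^ n * (volume D).toReal) := by
    rw [hAsmul, Measure.addHaar_smul, finrank_euclideanSpace_fin, abs_of_nonneg (by positivity),
      ENNReal.ofReal_mul (by positivity), ENNReal.ofReal_toReal hDc.measure_lt_top.ne]
  have hfin : (1 : ENNReal) ≤ ENNReal.ofReal ((2 * R) ^ n * (volume D).toReal + 1/2) := by
    rw [ENNReal.ofReal_add (by positivity) (by norm_num), ← hvolA, ← hsum]
    exact add_le_add hAv hcompl
  rw [ENNReal.one_le_ofReal] at hfin
  have h2R : 1200 * Real.sqrt p = 2 * R := by rw [hR]; ring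
  rw [h2R]
  linarith

/-- There is a universal constant `c > 0` such that for every positive
integer `n` there exists an origin-symmetric convex body `L ⊆ ℝⁿ` with nonempty
interior whose outer volume ratio to the subspaces of `L_p` satisfies
`d_ovr(L, L_pⁿ) ≥ c √n / √p` for all `p ≥ 1`; equivalently, every `D ∈ L_pⁿ`
containing `L` satisfies `(|D|/|L|)^{1/n} ≥ c √n / √p`. -/
theorem outer_volume_ratio_lower_bound :
    ∃ c : ℝ, 0 < c ∧ ∀ n : ℕ, 0 < n →
      ∃ L : Set (EuclideanSpace ℝ (Fin n)),
        IsCompact L ∧ Convex ℝ L ∧ L = -L ∧ (interior L).Nonempty ∧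
        ∀ p : ℝ, 1 ≤ p →
          ∀ D : Set (EuclideanSpace ℝ (Fin n)), IsLpBallImage n p D → L ⊆ D →
            c * Real.sqrt n / Real.sqrt p ≤
              ((volume D).toReal / (volume L).toReal) ^ ((1 : ℝ) / n) := by
  
  obtain ⟨K, hK⟩ := exists_pow_lt_of_lt_one (show (0:ℝ) < 1 / 2000 by norm_num)
    (show (46/47 : ℝ) < 1 by norm_num)
  have hK0 : 0 < K := by
    rcases Nat.eq_zero_or_pos K with rfl | h
    · norm_num at hK
    · exact h
  set M : ℝ := 2 ^ (2 * K + 1) * (2 * Real.exp Real.pi) with hM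
  have hM0 : 0 < M := by positivity
  refine ⟨1 / (2 * 1200 * M), by positivity, fun n hn => ?_⟩
  obtain ⟨X, hX⟩ := exists_signs n K hn hK
  have hN : 0 < K * n := Nat.mul_pos hK0 hn
  have hn' : (0:ℝ) < Real.sqrt n := Real.sqrt_pos.2 (by exact_mod_cast hn)
  let y : Fin (K * n) × Bool → EuclideanSpace ℝ (Fin n) := fun q => sgn q.2 • sv (X q.1)
  have hy : ∀ q, ‖y q‖ ≤ Real.sqrt n := by
    rintro ⟨i, b⟩
    simp only [y, norm_smul, sv_norm]
    cases b <;> simp [sgn]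
  have hvol : volume (convexHull ℝ (range y)) ≤ ENNReal.ofReal ((M / Real.sqrt n) ^ n) := by
    refine (volume_hull hn y hy).trans ((mul_le_mul_right (volume_ball_two hn) _).trans ?_)
    rw [← ENNReal.ofReal_natCast, ← ENNReal.ofReal_mul (by positivity)]
    apply ENNReal.ofReal_le_ofReal
    apply le_of_eq
    simp only [Fintype.card_prod, Fintype.card_fin, Fintype.card_bool]
    push_cast
    have h1 : K * n * 2 + n = (2 * K + 1) * n := by ring
    rw [h1, pow_mul, ← mul_pow, hM]
    congr 1
    ring
  have hyneg : ∀ i b, - y (i, b) = y (i, !b) := by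
    intro i b
    cases b <;> simp [y, sgn]
  have hball : ball (0 : EuclideanSpace ℝ (Fin n)) (1/100) ⊆ convexHull ℝ (range y) := by
    intro z hz
    by_contra hcon
    have hcl : IsClosed (convexHull ℝ (range y)) := (finite_range y).isClosed_convexHull ℝ
    obtain ⟨g, u, hg1, hg2⟩ := geometric_hahn_banach_closed_point (convex_convexHull ℝ _) hcl hcon
    obtain ⟨ξ, rfl⟩ := (InnerProductSpace.toDual ℝ (EuclideanSpace ℝ (Fin n))).surjective g
    simp only [InnerProductSpace.toDual_apply_apply] at hg1 hg2
    have h1 : ∀ i, |inner ℝ (sv (X i)) ξ| < u := by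
      intro i
      have ht := hg1 _ (subset_convexHull ℝ _ (mem_range_self (i, true)))
      have hf := hg1 _ (subset_convexHull ℝ _ (mem_range_self (i, false)))
      simp only [y, sgn, inner_smul_right] at ht hf
      rw [real_inner_comm] at ht hf
      simp at ht hf
      rw [abs_lt]
      constructor <;> linarith
    have h2 := hX ξ
    have h3 : ∑ i, |inner ℝ (sv (X i)) ξ| ≤ ((K * n : ℕ) : ℝ) * u := by
      refine (Finset.sum_le_sum fun i _ => (h1 i).le).trans ?_
      simp
    have hN' : (0:ℝ) < ((K * n : ℕ) : ℝ) := by exact_mod_cast hN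
    have h4 : ‖ξ‖ / 100 ≤ u := by
      refine le_of_mul_le_mul_left ?_ hN'
      linarith
    have h5 := real_inner_le_norm ξ z
    have h6 : ‖z‖ < 1 / 100 := by simpa using hz
    nlinarith [norm_nonneg ξ]
  refine ⟨convexHull ℝ (range y), (finite_range y).isCompact_convexHull ℝ, convex_convexHull ℝ _,
    ?_, ?_, ?_⟩
  · rw [← convexHull_neg]
    congr 1
    ext v
    rw [Set.mem_neg]
    constructor
    · rintro ⟨⟨i, b⟩, rfl⟩
      exact ⟨(i, !b), (hyneg i b).symm⟩
    · rintro ⟨⟨i, b⟩, h⟩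
      exact ⟨(i, !b), by rw [← hyneg, h, neg_neg]⟩
  · exact ⟨0, interior_mono hball (by rw [isOpen_ball.interior_eq]; simp)⟩
  · intro p hp D hD hLD
    have hp0 : 0 < Real.sqrt p := Real.sqrt_pos.2 (by linarith)
    have hxD : ∀ i, sv (X i) ∈ D := by
      intro i
      apply hLD
      apply subset_convexHull
      exact ⟨(i, true), by simp [y, sgn]⟩
    have h1 := volume_D hN (fun i => sv (X i)) hX p hp D hD hxD
    have h2 : (volume (convexHull ℝ (range y))).toReal ≤ (M / Real.sqrt n) ^ n :=
      ENNReal.toReal_le_of_le_ofReal (by positivity) hvol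
    have h3 : 0 < (volume (convexHull ℝ (range y))).toReal := by
      apply ENNReal.toReal_pos
      · exact ((measure_ball_pos volume 0 (by norm_num)).trans_le (measure_mono hball)).ne'
      · exact (hvol.trans_lt ENNReal.ofReal_lt_top).ne
    set a := (volume D).toReal with ha
    set b := (volume (convexHull ℝ (range y))).toReal with hb
    have h4 : (1 / (2 * 1200 * M) * Real.sqrt n / Real.sqrt p) ^ n ≤ a / b := by
      rw [le_div_iff₀ h3]
      have h5 : (0:ℝ) < (1200 * Real.sqrt p) ^ n := by positivity
      refine le_of_mul_le_mul_left (le_trans ?_ h1) h5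
      calc (1200 * Real.sqrt p) ^ n * ((1 / (2 * 1200 * M) * Real.sqrt n / Real.sqrt p) ^ n * b)
          ≤ (1200 * Real.sqrt p) ^ n * ((1 / (2 * 1200 * M) * Real.sqrt n / Real.sqrt p) ^ n *
            (M / Real.sqrt n) ^ n) := by gcongr
        _ = (1 / 2) ^ n := by
            rw [← mul_pow, ← mul_pow]
            congr 1
            field_simp
        _ ≤ (1 / 2) ^ 1 := pow_le_pow_of_le_one (by norm_num) (by norm_num) hn
        _ = 1 / 2 := by norm_num
    have h6 := Real.rpow_le_rpow (by positivity) h4 (show (0:ℝ) ≤ (1:ℝ) / n by positivity)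
    rw [one_div (n : ℝ), Real.pow_rpow_inv_natCast (by positivity) hn.ne'] at h6
    rw [one_div (n : ℝ)]
    exact h6
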